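/- Let p : I × I → [0,∞) satisfy hypotheses (H1), (H2), (H3) and (H4). Then there exists a constant C₁ > 0, depending only on S, δ₀, K and λ, such that for all x ∈ I, all s,t ∈ Δ_x and every v ∈ [s,t] (note that [s,t] ⊆ Δ_x): all three Green kernel values are finite and C₁⁻¹·G_{p,Δ_x}(s,v)·G_{p,Δ_x}(v,t) ≤ G_{p,Δ_x}(s,t) ≤ C₁·G_{p,Δ_x}(s,v)·G_{p,Δ_x}(v,t). (Lemma 4.3 of the paper: almost multiplicativity of the Green kernels along geodesics, uniformly over the branches Δ_x.) -/

import Mathlib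

open scoped ENNReal

namespace Paper

/-- Words in the two letters `α, β`: the free monoid on two generators, as `List Bool`.
The head of the list is the leftmost letter. -/
abbrev Word := List Bool

/-- Length of the longest common prefix of two lists. -/
def lcpLen : List Bool → List Bool → ℕ
  | a :: s, b :: t => if a = b then lcpLen s t + 1 else 0
  | _, _ => 0

/-- Length of the longest common suffix of two words. -/
def lcsLen (s t : Word) : ℕ := lcpLen s.reverse t.reverse

/-- The tree metric on `Word`: `d(s,t) = (|s| - k) + (|t| - k)`, `k` the length of the
longest common suffix. -/
def treeDist (s t : Word) : ℕ := (s.length - lcsLen s t) + (t.length - lcsLen s t)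

/-- The branch `Δ_x = {u x : u ∈ I}` of words having `x` as a suffix. -/
def Delta (x : Word) : Set Word := {s | x <:+ s}

/-- The geodesic segment `[s,t] = {v : d(s,v) + d(v,t) = d(s,t)}`. -/
def geodesic (s t : Word) : Set Word := {v | treeDist s v + treeDist v t = treeDist s t}

/-- Paths of `n` steps from `s` to `t` staying in `Ω`. -/
def pathSet {X : Type*} (Ω : Set X) (n : ℕ) (s t : X) : Set (Fin (n + 1) → X) :=
  {σ | σ 0 = s ∧ σ (Fin.last n) = t ∧ ∀ i, σ i ∈ Ω}

/-- The weight `∏ a(s_i, s_{i+1})` of a path, as an extended nonnegative real. -/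
noncomputable def weightE {X : Type*} (a : X → X → ℝ) (n : ℕ) (σ : Fin (n + 1) → X) : ℝ≥0∞ :=
  ∏ i : Fin n, ENNReal.ofReal (a (σ i.castSucc) (σ i.succ))

/-- The `n`-step kernel `a⁽ⁿ⁾(s,t)` of the kernel `a` on `Ω`, with values in `[0,∞]`. -/
noncomputable def nStepE {X : Type*} (Ω : Set X) (a : X → X → ℝ) (n : ℕ) (s t : X) : ℝ≥0∞ :=
  ∑' σ : pathSet Ω n s t, weightE a n σ.1

/-- The Green kernel `G_a(s,t) = Σ_n a⁽ⁿ⁾(s,t)` of `a` on `Ω`, with values in `[0,∞]`. -/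
noncomputable def greenE {X : Type*} (Ω : Set X) (a : X → X → ℝ) (s t : X) : ℝ≥0∞ :=
  ∑' n : ℕ, nStepE Ω a n s t

/-- The weight of a path, real version (for signed kernels). -/
noncomputable def weightR {X : Type*} (a : X → X → ℝ) (n : ℕ) (σ : Fin (n + 1) → X) : ℝ :=
  ∏ i : Fin n, a (σ i.castSucc) (σ i.succ)

/-- The `n`-step kernel of a signed kernel `a` on `Ω`. -/
noncomputable def nStepR {X : Type*} (Ω : Set X) (a : X → X → ℝ) (n : ℕ) (s t : X) : ℝ :=
  ∑' σ : pathSet Ω n s t, weightR a n σ.1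

/-- The Green kernel of a signed kernel `a` on `Ω`, as a real number. -/
noncomputable def greenR {X : Type*} (Ω : Set X) (a : X → X → ℝ) (s t : X) : ℝ :=
  ∑' n : ℕ, nStepR Ω a n s t

/-- The Green kernel of `|a|`: finiteness of this expresses absolute convergence of the
series defining the Green kernel of `a`. -/
noncomputable def greenAbs {X : Type*} (Ω : Set X) (a : X → X → ℝ) (s t : X) : ℝ≥0∞ :=
  greenE Ω (fun u v => |a u v|) s t

/-- (H1): finite range `S`. -/
def H1 (p : Word → Word → ℝ) (S : ℕ) : Prop := ∀ s t, S < treeDist s t → p s t = 0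

/-- (H2): nonzero transition probabilities are bounded below by `δ₀`. -/
def H2 (p : Word → Word → ℝ) (δ₀ : ℝ) : Prop := ∀ s t, 0 < p s t → δ₀ ≤ p s t

/-- (H3): uniform irreducibility. -/
def H3 (p : Word → Word → ℝ) (δ₀ : ℝ) (K : ℕ) : Prop :=
  ∀ s t, treeDist s t = 1 → ∃ k ≤ K, ∃ u : ℕ → Word, u 0 = s ∧ u k = t ∧
    ∀ i < k, ∀ x : Word, δ₀ ≤ p (u i ++ x) (u (i + 1) ++ x)

/-- The operator `(Pf)(s) = Σ_t p(s,t) f(t)` extends to a bounded operator of norm at most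
`lam` on `ℓ²(X, m)`, expressed via the associated bilinear form on finitely supported
functions. -/
def opNormBound {X : Type*} (m : X → ℝ) (p : X → X → ℝ) (lam : ℝ) : Prop :=
  ∀ f g : X → ℝ, (Function.support f).Finite → (Function.support g).Finite →
    |∑' s, m s * g s * ∑' t, p s t * f t| ≤
      lam * Real.sqrt (∑' x, m x * f x ^ 2) * Real.sqrt (∑' x, m x * g x ^ 2)

/-- (H4): there is a weight `m` for which `P` is bounded of norm at most `lam` on `ℓ²(I,m)`. -/
def H4 (p : Word → Word → ℝ) (m : Word → ℝ) (lam : ℝ) : Prop :=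
  (∀ x, 0 < m x) ∧ opNormBound m p lam

/-- Substochasticity: `Σ_t p(s,t) ≤ 1` for every `s`. -/
def Substochastic (p : Word → Word → ℝ) : Prop :=
  ∀ s, (∑' t, ENNReal.ofReal (p s t)) ≤ 1

/-- `b` is a `q`-perturbation of `p` on `Δ_z` (with constant `C`). -/
def Perturb (p b : Word → Word → ℝ) (z : Word) (q C : ℝ) : Prop :=
  ∀ s t, s ∈ Delta z → t ∈ Delta z →
    |b s t| ≤ p s t ∧ |b s t - p s t| ≤ C * q ^ s.length

/-- The word `ω|k = ω(k-1) ω(k-2) ⋯ ω(0)` of length `k` determined by an end `ω`. -/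
def endWord (ω : ℕ → Bool) (k : ℕ) : Word := (List.range k).reverse.map ω

/-- The last-entrance kernel `M_p(s,u)`: sum over paths from `s` to `u` of length at least
one whose second-to-last point lies outside `Δ_x`. -/
noncomputable def lastEnter (p : Word → Word → ℝ) (x s u : Word) : ℝ≥0∞ :=
  ∑' m : ℕ, ∑' σ : {σ : Fin (m + 2) → Word //
      σ ∈ pathSet Set.univ (m + 1) s u ∧ σ ((Fin.last m).castSucc) ∉ Delta x},
    weightE p (m + 1) σ.1

/-- The quantum integer `[n]_q = (q⁻ⁿ - qⁿ)/(q⁻¹ - q)`. -/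
noncomputable def qInt (q : ℝ) (n : ℕ) : ℝ := (q ^ (-(n : ℤ)) - q ^ (n : ℤ)) / (q⁻¹ - q)

/-- The lengths of the blocks in the canonical factorization of a word into maximal
alternating subwords. -/
def blockLens : Word → List ℕ
  | [] => []
  | [_] => [1]
  | a :: b :: rest =>
    match blockLens (b :: rest) with
    | [] => [1]
    | k :: ks => if a = b then 1 :: (k :: ks) else (k + 1) :: ks

/-- The quantum dimension `dim_q(x) = Π_i [|x_i| + 1]_q` over the blocks of `x`. -/
noncomputable def dimq (q : ℝ) (x : Word) : ℝ := ((blockLens x).map fun L => qInt q (L + 1)).prod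

/-- The classical dimension `dim(x) = Π_i (|x_i| + 1)` over the blocks of `x`. -/
noncomputable def dimn (x : Word) : ℝ := ((blockLens x).map fun L => (L + 1 : ℝ)).prod

/-- The involution `x ↦ x̄`: reverse the word and exchange the two letters. -/
def bar (x : Word) : Word := (x.map fun a => !a).reverse

/-- The fusion multiplicity `mᵗ_{r,s}`: the number of words `z` such that `r = r₀ z`,
`s = z̄ s₀`, `t = r₀ s₀` for some `r₀, s₀`. -/
noncomputable def fuse (r s t : Word) : ℕ :=
  {z : Word | ∃ r₀ s₀ : Word, r = r₀ ++ z ∧ s = bar z ++ s₀ ∧ t = r₀ ++ s₀}.ncard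

/-- A finitely supported probability measure on `Word`. -/
def IsProbMeasure (μ : Word → ℝ) : Prop :=
  (∀ x, 0 ≤ μ x) ∧ (Function.support μ).Finite ∧ ∑' x, μ x = 1

/-- The transition kernel `p_μ(s,t) = Σ_r μ(r) mᵗ_{r,s} dim_q(t)/(dim_q(r) dim_q(s))`. -/
noncomputable def pMu (q : ℝ) (μ : Word → ℝ) (s t : Word) : ℝ :=
  ∑' r, μ r * (fuse r s t : ℝ) * dimq q t / (dimq q r * dimq q s)

/-- The `q`-binomial coefficient. -/
noncomputable def qbinom (q : ℝ) (n k : ℕ) : ℝ :=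
  q ^ (-((k * (n - k) : ℕ) : ℤ)) *
    ∏ i ∈ Finset.range k, (1 - q ^ (2 * (n - i))) / (1 - q ^ (2 * (k - i)))



section helpers

variable {X : Type*}

lemma nStep_notMem (Ω : Set X) (a : X → X → ℝ) (n : ℕ) (s t : X) (hs : s ∉ Ω) :
    nStepE Ω a n s t = 0 := by
  unfold nStepE
  have : IsEmpty (pathSet Ω n s t) := ⟨fun σ => hs (σ.2.1 ▸ σ.2.2.2 0)⟩
  exact tsum_empty

lemma nStep_zero_self (Ω : Set X) (a : X → X → ℝ) (s : X) (hs : s ∈ Ω) :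
    nStepE Ω a 0 s s = 1 := by
  unfold nStepE
  rw [tsum_eq_single (⟨fun _ => s, rfl, rfl, fun _ => hs⟩ : pathSet Ω 0 s s)]
  · simp [weightE]
  · intro b hb
    exfalso
    apply hb
    apply Subtype.ext
    funext i
    have : i = 0 := Fin.ext (by omega)
    rw [this]
    exact b.2.1

lemma nStep_zero_ne (Ω : Set X) (a : X → X → ℝ) (s t : X) (hs : s ≠ t) :
    nStepE Ω a 0 s t = 0 := by
  unfold nStepE
  have : IsEmpty (pathSet Ω 0 s t) := ⟨fun σ => hs (σ.2.1 ▸ σ.2.2.1)⟩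
  exact tsum_empty

/-- Splitting off the first step. -/
def pathEquiv (Ω : Set X) (n : ℕ) (s t : X) (hs : s ∈ Ω) :
    (Σ u, pathSet Ω n u t) ≃ pathSet Ω (n + 1) s t where
  toFun τ := ⟨Fin.cons s τ.2.1, by
    refine ⟨rfl, ?_, ?_⟩
    · rw [← Fin.succ_last, Fin.cons_succ]
      exact τ.2.2.2.1
    · intro i
      refine Fin.cases ?_ (fun j => ?_) i
      · simpa using hs
      · simpa using τ.2.2.2.2 j⟩
  invFun σ := ⟨σ.1 1, ⟨Fin.tail σ.1, by
    refine ⟨rfl, ?_, fun i => σ.2.2.2 _⟩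
    simpa [Fin.tail] using σ.2.2.1⟩⟩
  left_inv := by
    rintro ⟨u, τ, h0, ht, hΩ⟩
    subst h0
    rfl
  right_inv := by
    rintro ⟨σ, h0, ht, hΩ⟩
    apply Subtype.ext
    subst h0
    exact Fin.cons_self_tail σ

lemma nStep_succ (Ω : Set X) (a : X → X → ℝ) (n : ℕ) (s t : X) (hs : s ∈ Ω) :
    nStepE Ω a (n + 1) s t = ∑' u, ENNReal.ofReal (a s u) * nStepE Ω a n u t := by
  unfold nStepE
  rw [← (pathEquiv Ω n s t hs).tsum_eq, ENNReal.tsum_sigma']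
  congr 1
  funext u
  rw [← ENNReal.tsum_mul_left]
  congr 1
  funext τ
  have h0 : τ.1 0 = u := τ.2.1
  simp only [weightE, pathEquiv, Equiv.coe_fn_mk]
  rw [Fin.prod_univ_succ]
  simp [h0]

lemma green_notMem (Ω : Set X) (a : X → X → ℝ) (s t : X) (hs : s ∉ Ω) :
    greenE Ω a s t = 0 := by
  simp [greenE, nStep_notMem Ω a _ s t hs]

lemma green_rec (Ω : Set X) (a : X → X → ℝ) (s t : X) (hs : s ∈ Ω) :
    greenE Ω a s t = nStepE Ω a 0 s t + ∑' u, ENNReal.ofReal (a s u) * greenE Ω a u t := by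
  unfold greenE
  rw [tsum_eq_zero_add' ENNReal.summable]
  simp_rw [nStep_succ Ω a _ s t hs, ← ENNReal.tsum_mul_left]
  rw [ENNReal.tsum_comm]

lemma green_super (Ω : Set X) (a : X → X → ℝ) (s t : X) (hs : s ∈ Ω) :
    ∑' u, ENNReal.ofReal (a s u) * greenE Ω a u t ≤ greenE Ω a s t := by
  rw [green_rec Ω a s t hs]
  exact le_add_self

lemma green_step (Ω : Set X) (a : X → X → ℝ) (s u t : X) (hs : s ∈ Ω) :
    ENNReal.ofReal (a s u) * greenE Ω a u t ≤ greenE Ω a s t :=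
  (ENNReal.le_tsum u).trans (green_super Ω a s t hs)

lemma one_le_green (Ω : Set X) (a : X → X → ℝ) (s : X) (hs : s ∈ Ω) :
    1 ≤ greenE Ω a s s := by
  rw [green_rec Ω a s s hs, nStep_zero_self Ω a s hs]
  exact le_self_add

lemma min_principle (Ω : Set X) (a : X → X → ℝ) (t : X) (c : ℝ≥0∞) (h : X → ℝ≥0∞)
    (A B : Set X) (hB : ∀ s ∈ A, s ∈ Ω → s ∈ B → c * greenE Ω a s t ≤ h s)
    (hA : ∀ s ∈ A, s ∈ Ω → s ∉ B → s ≠ t ∧ (∑' u, ENNReal.ofReal (a s u) * h u ≤ h s) ∧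
      ∀ u, a s u ≠ 0 → u ∈ A) (s : X) (hs : s ∈ A) : c * greenE Ω a s t ≤ h s := by
  have key : ∀ N : ℕ, ∀ s ∈ A, c * ∑ n ∈ Finset.range N, nStepE Ω a n s t ≤ h s := by
    intro N
    induction N with
    | zero => intro s _; simp
    | succ N ih =>
      intro s hs
      by_cases hΩ : s ∈ Ω
      · by_cases hsB : s ∈ B
        · refine le_trans ?_ (hB s hs hΩ hsB)
          gcongr
          exact ENNReal.sum_le_tsum _
        · obtain ⟨hne, hsup, hcl⟩ := hA s hs hΩ hsB
          rw [Finset.sum_range_succ', nStep_zero_ne Ω a s t hne, add_zero]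
          simp_rw [nStep_succ Ω a _ s t hΩ]
          rw [← Summable.tsum_finsetSum (fun _ _ => ENNReal.summable), ← ENNReal.tsum_mul_left]
          refine le_trans (ENNReal.tsum_le_tsum fun u => ?_) hsup
          rw [← Finset.mul_sum, mul_left_comm]
          by_cases hu : a s u = 0
          · simp [hu]
          · gcongr
            exact ih u (hcl u hu)
      · simp [nStep_notMem Ω a _ s t hΩ]
  unfold greenE
  rw [ENNReal.tsum_eq_iSup_nat, ENNReal.mul_iSup]
  exact iSup_le fun N => key N s hs

lemma green_lower (Ω : Set X) (a : X → X → ℝ) (s v t : X) :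
    greenE Ω a v t * greenE Ω a s v ≤ greenE Ω a v v * greenE Ω a s t := by
  refine min_principle Ω a v (greenE Ω a v t) (fun s => greenE Ω a v v * greenE Ω a s t)
    Set.univ {v} ?_ ?_ s trivial
  · rintro s _ _ rfl
    exact (mul_comm _ _).le
  · intro s _ hs hsv
    refine ⟨hsv, ?_, fun _ _ => trivial⟩
    simp_rw [mul_left_comm _ (greenE Ω a v v)]
    rw [ENNReal.tsum_mul_left]
    gcongr
    exact green_super Ω a s t hs

end helpers

section tree

lemma lcp_le_left (a b : List Bool) : lcpLen a b ≤ a.length := by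
  induction a generalizing b with
  | nil => simp [lcpLen]
  | cons x a ih =>
    cases b with
    | nil => simp [lcpLen]
    | cons y b =>
      simp only [lcpLen, List.length_cons]
      split_ifs
      · have := ih b; omega
      · omega

lemma lcp_comm (a b : List Bool) : lcpLen a b = lcpLen b a := by
  induction a generalizing b with
  | nil => cases b <;> simp [lcpLen]
  | cons x a ih =>
    cases b with
    | nil => simp [lcpLen]
    | cons y b => simp only [lcpLen, ih b, eq_comm]

lemma lcp_ultra (a b c : List Bool) : min (lcpLen a b) (lcpLen b c) ≤ lcpLen a c := by
  induction a generalizing b c with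
  | nil => simp [lcpLen]
  | cons x a ih =>
    cases b with
    | nil => simp [lcpLen]
    | cons y b =>
      cases c with
      | nil => simp [lcpLen]
      | cons z c =>
        simp only [lcpLen]
        have := ih b c
        split_ifs <;> first | omega | (simp_all)

lemma lcp_append (a b : List Bool) : lcpLen a (a ++ b) = a.length := by
  induction a with
  | nil => simp [lcpLen]
  | cons x a ih => simp [lcpLen, ih]

lemma lcp_decomp (a b : List Bool) :
    ∃ c a' b', a = c ++ a' ∧ b = c ++ b' ∧ c.length = lcpLen a b := by
  induction a generalizing b with
  | nil => exact ⟨[], [], b, rfl, rfl, by simp [lcpLen]⟩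
  | cons x a ih =>
    cases b with
    | nil => exact ⟨[], _, _, rfl, rfl, by simp [lcpLen]⟩
    | cons y b =>
      by_cases h : x = y
      · subst h
        obtain ⟨c, a', b', h1, h2, h3⟩ := ih b
        exact ⟨x :: c, a', b', by simp [h1], by simp [h2], by simp [lcpLen, h3]⟩
      · exact ⟨[], _, _, rfl, rfl, by simp [lcpLen, h]⟩

lemma lcs_le_left (a b : Word) : lcsLen a b ≤ a.length := by
  simpa [lcsLen] using lcp_le_left a.reverse b.reverse

lemma lcs_comm (a b : Word) : lcsLen a b = lcsLen b a := lcp_comm _ _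

lemma lcs_le_right (a b : Word) : lcsLen a b ≤ b.length := by
  rw [lcs_comm]; exact lcs_le_left b a

lemma lcs_ultra (a b c : Word) : min (lcsLen a b) (lcsLen b c) ≤ lcsLen a c := lcp_ultra _ _ _

lemma lcs_append (a b : Word) : lcsLen a (b ++ a) = a.length := by
  simp [lcsLen, lcp_append]

lemma lcs_decomp (a b : Word) :
    ∃ c a' b', a = a' ++ c ∧ b = b' ++ c ∧ c.length = lcsLen a b := by
  obtain ⟨c, a', b', h1, h2, h3⟩ := lcp_decomp a.reverse b.reverse
  refine ⟨c.reverse, a'.reverse, b'.reverse, ?_, ?_, ?_⟩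
  · rw [← List.reverse_append, ← h1, List.reverse_reverse]
  · rw [← List.reverse_append, ← h2, List.reverse_reverse]
  · simpa [lcsLen] using h3

lemma mem_Delta_iff (x s : Word) : s ∈ Delta x ↔ lcsLen x s = x.length := by
  constructor
  · rintro ⟨w, rfl⟩
    exact lcs_append x w
  · intro h
    obtain ⟨c, a', b', h1, h2, h3⟩ := lcs_decomp x s
    have : a' = [] := by
      have := congrArg List.length h1
      simp at this
      exact List.eq_nil_of_length_eq_zero (by omega)
    subst this
    exact ⟨b', by rw [h2]; simp at h1; rw [h1]⟩

lemma treeDist_cons (a : Bool) (c : Word) : treeDist (a :: c) c = 1 ∧ treeDist c (a :: c) = 1 := by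
  have h : lcsLen c (a :: c) = c.length := lcs_append c [a]
  have h' := lcs_comm (a :: c) c
  simp [treeDist, h, h']

lemma geodesic_Delta (x s t v : Word) (hs : s ∈ Delta x) (ht : t ∈ Delta x)
    (hv : v ∈ geodesic s t) : v ∈ Delta x := by
  rw [mem_Delta_iff] at *
  simp only [geodesic, treeDist, Set.mem_ofPred_eq] at hv
  have := lcs_le_left s v
  have := lcs_le_right s v
  have := lcs_le_left v t
  have := lcs_le_right v t
  have := lcs_le_left s t
  have := lcs_le_right s t
  have := lcs_le_left x v
  have := lcs_ultra x s v
  have := lcs_ultra x t v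
  have := lcs_ultra s x t
  have := lcs_comm s x
  have := lcs_comm t v
  omega

lemma geodesic_cases (s t v : Word) (hv : v ∈ geodesic s t) :
    (lcsLen s v = v.length ∧ lcsLen v t = lcsLen s t) ∨
    (lcsLen v t = v.length ∧ lcsLen s v = lcsLen s t) := by
  simp only [geodesic, treeDist, Set.mem_ofPred_eq] at hv
  have := lcs_le_left s v
  have := lcs_le_right s v
  have := lcs_le_left v t
  have := lcs_le_right v t
  have := lcs_le_left s t
  have := lcs_le_right s t
  have := lcs_ultra s v t
  have := lcs_ultra s t v
  have := lcs_ultra v s t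
  have := lcs_comm t v
  have := lcs_comm s v
  omega

lemma geodesic_of_cases (s t v : Word) (h :
    (lcsLen s v = v.length ∧ lcsLen v t = lcsLen s t) ∨
    (lcsLen v t = v.length ∧ lcsLen s v = lcsLen s t)) : v ∈ geodesic s t := by
  simp only [geodesic, treeDist, Set.mem_ofPred_eq]
  have := lcs_le_left s v
  have := lcs_le_right s v
  have := lcs_le_left v t
  have := lcs_le_right v t
  have := lcs_le_left s t
  have := lcs_le_right s t
  omega

lemma lcs_eq_of_lt (a b c : Word) (h : lcsLen a b < lcsLen a c) : lcsLen c b = lcsLen a b := by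
  have := lcs_ultra a c b
  have := lcs_ultra c a b
  have := lcs_comm c a
  omega

lemma geodesic_move (s t u v : Word) (S : ℕ) (hv : v ∈ geodesic s t)
    (h1 : S < treeDist s v) (h2 : treeDist s u ≤ S) : v ∈ geodesic u t := by
  apply geodesic_of_cases
  have b1 := lcs_le_left s v
  have b2 := lcs_le_right s v
  have b3 := lcs_le_left s u
  have b4 := lcs_le_right s u
  have hd : s.length + u.length + 2 * lcsLen s v < s.length + v.length + 2 * lcsLen s u := by
    simp only [treeDist] at h1 h2
    omega
  rcases geodesic_cases s t v hv with ⟨e1, e2⟩ | ⟨e1, e2⟩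
  · left
    have b5 := lcs_le_left v t
    have h3 : lcsLen u v = lcsLen s v ∨ lcsLen u v = v.length := by
      have := lcs_ultra u s v
      have := lcs_comm u s
      have := lcs_le_right u v
      omega
    have h4 := lcs_eq_of_lt s t u (by omega)
    omega
  · right
    refine ⟨e1, ?_⟩
    by_cases hlt : lcsLen s v < lcsLen s u
    · have h3 := lcs_eq_of_lt s v u hlt
      have h4 := lcs_eq_of_lt s t u (by omega)
      omega
    · have b5 := lcs_le_left u v
      have h5 := lcs_eq_of_lt v u t (by rw [lcs_comm v u]; omega)
      rw [lcs_comm u t, h5, lcs_comm]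

lemma treeDist_self (s : Word) : treeDist s s = 0 := by
  have : lcsLen s s = s.length := lcs_append s []
  simp [treeDist, this]

lemma treeDist_comm (s t : Word) : treeDist s t = treeDist t s := by
  simp [treeDist, lcs_comm s t, add_comm]

lemma length_le_treeDist (s t : Word) : s.length ≤ t.length + treeDist s t := by
  have := lcs_le_right s t
  simp only [treeDist]
  omega

end tree

section harnack

variable {p : Word → Word → ℝ} {δ₀ : ℝ} {K : ℕ}

lemma harnack_nbr (hδ₀ : δ₀ ∈ Set.Ioo (0 : ℝ) 1) (h3 : H3 p δ₀ K) (x a b t : Word)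
    (hab : treeDist a b = 1) :
    ENNReal.ofReal δ₀ ^ K * greenE (Delta x) p (b ++ x) t ≤ greenE (Delta x) p (a ++ x) t := by
  obtain ⟨k, hk, u, h0, hk', hu⟩ := h3 a b hab
  have hD : ENNReal.ofReal δ₀ ≤ 1 := by
    rw [ENNReal.ofReal_le_one]; exact hδ₀.2.le
  have key : ∀ j ≤ k, ENNReal.ofReal δ₀ ^ j * greenE (Delta x) p (u j ++ x) t ≤
      greenE (Delta x) p (a ++ x) t := by
    intro j
    induction j with
    | zero => intro _; simp [h0]
    | succ j ih =>
      intro hj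
      refine le_trans ?_ (ih (by omega))
      rw [pow_succ, mul_assoc]
      gcongr
      refine le_trans ?_ (green_step (Delta x) p (u j ++ x) (u (j + 1) ++ x) t ⟨u j, rfl⟩)
      gcongr
      exact hu j (by omega) x
  refine le_trans ?_ (hk' ▸ key k le_rfl)
  gcongr ?_ * _
  exact pow_le_pow_right_of_le_one' hD hk

lemma harnack_chain (hδ₀ : δ₀ ∈ Set.Ioo (0 : ℝ) 1) (h3 : H3 p δ₀ K) (x c t w : Word) :
    (ENNReal.ofReal δ₀ ^ K) ^ w.length * greenE (Delta x) p (c ++ x) t ≤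
      greenE (Delta x) p (w ++ c ++ x) t ∧
    (ENNReal.ofReal δ₀ ^ K) ^ w.length * greenE (Delta x) p (w ++ c ++ x) t ≤
      greenE (Delta x) p (c ++ x) t := by
  induction w with
  | nil => simp
  | cons a w ih =>
    have h := treeDist_cons a (w ++ c)
    have e1 := harnack_nbr hδ₀ h3 x _ _ t h.1
    have e2 := harnack_nbr hδ₀ h3 x _ _ t h.2
    constructor
    · rw [List.length_cons, pow_succ', mul_assoc]
      refine le_trans ?_ e1
      gcongr
      exact ih.1
    · rw [List.length_cons, pow_succ, mul_assoc]
      refine le_trans ?_ ih.2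
      gcongr
      exact e2

lemma harnack (hδ₀ : δ₀ ∈ Set.Ioo (0 : ℝ) 1) (h3 : H3 p δ₀ K) (x s v t : Word)
    (hs : s ∈ Delta x) (hv : v ∈ Delta x) :
    (ENNReal.ofReal δ₀ ^ K) ^ (treeDist s v) * greenE (Delta x) p v t ≤
      greenE (Delta x) p s t := by
  obtain ⟨c, a, b, ha, hb, hc⟩ := lcs_decomp s v
  have hcx : c ∈ Delta x := by
    have hl : x.length ≤ c.length := by
      rw [mem_Delta_iff] at hs hv
      have := lcs_ultra s x v
      have := lcs_comm s x
      omega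
    exact List.suffix_of_suffix_length_le hs (ha ▸ List.suffix_append a c) hl
  obtain ⟨c', rfl⟩ := hcx
  have h1 := (harnack_chain hδ₀ h3 x c' t a).1
  have h2 := (harnack_chain hδ₀ h3 x c' t b).2
  have hd : treeDist s v = a.length + b.length := by
    simp only [treeDist, ← hc]
    rw [ha, hb]
    simp
  rw [hd, pow_add, mul_assoc, ha, hb, ← List.append_assoc, ← List.append_assoc]
  refine le_trans ?_ h1
  gcongr

end harnack

section diag

variable {p : Word → Word → ℝ}

/-- The real `n`-step column. -/
noncomputable def colF (p : Word → Word → ℝ) (v : Word) : ℕ → Word → ℝ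
  | 0 => fun s => if s = v then 1 else 0
  | n + 1 => fun s => ∑' u, p s u * colF p v n u

lemma colF_nonneg (hp : ∀ s t, 0 ≤ p s t) (v : Word) (n : ℕ) (s : Word) : 0 ≤ colF p v n s := by
  induction n generalizing s with
  | zero => simp only [colF]; split_ifs <;> norm_num
  | succ n ih => exact tsum_nonneg fun u => mul_nonneg (hp s u) (ih u)

lemma colF_len {S : ℕ} (h1 : H1 p S) (v : Word) (n : ℕ) (s : Word) (hs : colF p v n s ≠ 0) :
    s.length ≤ v.length + n * S := by
  induction n generalizing s with
  | zero =>
    simp only [colF] at hs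
    by_cases h : s = v
    · simp [h]
    · simp [h] at hs
  | succ n ih =>
    by_contra hlt
    apply hs
    simp only [colF]
    convert tsum_zero with u
    by_contra hne
    have hu := ih u (right_ne_zero_of_mul hne)
    have hd : treeDist s u ≤ S := by
      by_contra hd
      exact left_ne_zero_of_mul hne (h1 s u (by omega))
    have := length_le_treeDist s u
    rw [Nat.succ_mul] at hlt
    omega

lemma colF_supp {S : ℕ} (h1 : H1 p S) (v : Word) (n : ℕ) :
    (Function.support (colF p v n)).Finite :=
  (List.finite_length_le Bool (v.length + n * S)).subset fun s hs => colF_len h1 v n s hs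

lemma nStep_le_colF (hp : ∀ s t, 0 ≤ p s t) {S : ℕ} (h1 : H1 p S) (Ω : Set Word) (v : Word)
    (n : ℕ) (s : Word) : nStepE Ω p n s v ≤ ENNReal.ofReal (colF p v n s) := by
  induction n generalizing s with
  | zero =>
    by_cases h : s = v
    · subst h
      by_cases hs : s ∈ Ω
      · simp [nStep_zero_self Ω p s hs, colF]
      · simp [nStep_notMem Ω p _ s _ hs]
    · simp [nStep_zero_ne Ω p s v h]
  | succ n ih =>
    by_cases hs : s ∈ Ω
    · rw [nStep_succ Ω p n s v hs]
      simp only [colF]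
      rw [ENNReal.ofReal_tsum_of_nonneg (fun u => mul_nonneg (hp s u) (colF_nonneg hp v n u))]
      · refine ENNReal.tsum_le_tsum fun u => ?_
        rw [ENNReal.ofReal_mul (hp s u)]
        gcongr
        exact ih u
      · apply summable_of_hasFiniteSupport
        exact (colF_supp h1 v n).subset fun u hu => right_ne_zero_of_mul hu
    · simp [nStep_notMem Ω p _ s _ hs]

lemma colF_diag (hp : ∀ s t, 0 ≤ p s t) {S : ℕ} (h1 : H1 p S) {m : Word → ℝ} {lam : ℝ}
    (hlam : 0 < lam) (h4 : H4 p m lam) (v : Word) (n : ℕ) : colF p v n v ≤ lam ^ n := by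
  have hsum : ∀ n, Summable fun x => m x * colF p v n x ^ 2 := fun n => by
    apply summable_of_hasFiniteSupport
    refine (colF_supp h1 v n).subset fun u hu => ?_
    intro h
    apply hu
    simp [h]
  have hnn : ∀ n x, 0 ≤ m x * colF p v n x ^ 2 := fun n x =>
    mul_nonneg (h4.1 x).le (sq_nonneg _)
  have hN : ∀ n, Real.sqrt (∑' x, m x * colF p v n x ^ 2) ≤ lam ^ n * Real.sqrt (m v) := by
    intro n
    induction n with
    | zero =>
      rw [tsum_eq_single v (fun b hb => by simp [colF, hb])]
      simp [colF]
    | succ n ih =>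
      have h := h4.2 (colF p v n) (colF p v (n + 1)) (colF_supp h1 v n) (colF_supp h1 v (n + 1))
      have e : (∑' s, m s * colF p v (n + 1) s * ∑' t, p s t * colF p v n t) =
          ∑' x, m x * colF p v (n + 1) x ^ 2 := by
        congr 1
        funext s
        change m s * colF p v (n + 1) s * colF p v (n + 1) s = _
        ring
      rw [e, abs_of_nonneg (tsum_nonneg (hnn (n + 1)))] at h
      set A := ∑' x, m x * colF p v (n + 1) x ^ 2 with hA
      have hA0 : 0 ≤ A := tsum_nonneg (hnn (n + 1))
      rw [pow_succ']
      rcases hA0.eq_or_lt with h0 | h0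
      · rw [← h0, Real.sqrt_zero]; positivity
      · have hs : 0 < Real.sqrt A := Real.sqrt_pos.2 h0
        nth_rewrite 1 [← Real.mul_self_sqrt hA0] at h
        have h' := le_of_mul_le_mul_right h hs
        calc Real.sqrt A ≤ _ := h'
          _ ≤ lam * (lam ^ n * Real.sqrt (m v)) := by gcongr
          _ = _ := by ring
  have h := hN n
  have hmv := h4.1 v
  have hle : m v * colF p v n v ^ 2 ≤ ∑' x, m x * colF p v n x ^ 2 :=
    (hsum n).le_tsum v (fun j _ => hnn n j)
  have h2 : Real.sqrt (m v) * colF p v n v ≤ lam ^ n * Real.sqrt (m v) := by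
    refine le_trans ?_ h
    refine le_trans ?_ (Real.sqrt_le_sqrt hle)
    rw [Real.sqrt_mul hmv.le, Real.sqrt_sq (colF_nonneg hp v n v)]
  rw [mul_comm] at h2
  exact le_of_mul_le_mul_right h2 (Real.sqrt_pos.2 hmv)

lemma green_diag (hp : ∀ s t, 0 ≤ p s t) {S : ℕ} (h1 : H1 p S) {m : Word → ℝ} {lam : ℝ}
    (hlam : lam ∈ Set.Ioo (0 : ℝ) 1) (h4 : H4 p m lam) (Ω : Set Word) (v : Word) :
    greenE Ω p v v ≤ ENNReal.ofReal (1 - lam)⁻¹ := by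
  rw [← tsum_geometric_of_lt_one hlam.1.le hlam.2,
    ENNReal.ofReal_tsum_of_nonneg (fun n => pow_nonneg hlam.1.le n)
      (summable_geometric_of_lt_one hlam.1.le hlam.2)]
  refine ENNReal.tsum_le_tsum fun n => ?_
  refine (nStep_le_colF hp h1 Ω v n v).trans ?_
  exact ENNReal.ofReal_le_ofReal (colF_diag hp h1 hlam.1 h4 v n)

end diag

lemma green_upper {p : Word → Word → ℝ} {δ₀ : ℝ} {K S : ℕ}
    (hδ₀ : δ₀ ∈ Set.Ioo (0 : ℝ) 1) (h1 : H1 p S) (h3 : H3 p δ₀ K) (x s t v : Word)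
    (hvx : v ∈ Delta x) (hv : v ∈ geodesic s t) :
    (ENNReal.ofReal δ₀ ^ K) ^ (S + S) * greenE (Delta x) p s t ≤
      greenE (Delta x) p s v * greenE (Delta x) p v t := by
  set D := ENNReal.ofReal δ₀ ^ K with hD
  have hD1 : D ≤ 1 := by
    apply pow_le_one'
    rw [ENNReal.ofReal_le_one]; exact hδ₀.2.le
  refine min_principle (Delta x) p t (D ^ (S + S))
    (fun s => greenE (Delta x) p s v * greenE (Delta x) p v t)
    {u | v ∈ geodesic u t ∨ treeDist u v ≤ S} {u | treeDist u v ≤ S} ?_ ?_ s (Or.inl hv)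
  · intro s _ hs hB
    have hB : treeDist s v ≤ S := hB
    have e1 : D ^ S * greenE (Delta x) p s t ≤ greenE (Delta x) p v t := by
      refine le_trans ?_ (harnack hδ₀ h3 x v s t hvx hs)
      gcongr ?_ * _
      exact pow_le_pow_right_of_le_one' hD1 (by rw [treeDist_comm]; exact hB)
    have e2 : D ^ S ≤ greenE (Delta x) p s v := by
      refine le_trans ?_ (harnack hδ₀ h3 x s v v hs hvx)
      calc D ^ S = D ^ S * 1 := (mul_one _).symm
        _ ≤ _ := mul_le_mul' (pow_le_pow_right_of_le_one' hD1 hB) (one_le_green _ _ _ hvx)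
    rw [pow_add, mul_assoc]
    exact mul_le_mul' e2 e1
  · intro s hsA hs hB
    have hB : S < treeDist s v := not_le.1 hB
    have hg : v ∈ geodesic s t := by
      rcases hsA with h | h
      · exact h
      · omega
    refine ⟨?_, ?_, ?_⟩
    · rintro rfl
      simp only [geodesic, Set.mem_ofPred_eq, treeDist_self] at hg
      omega
    · simp_rw [← mul_assoc]
      rw [ENNReal.tsum_mul_right]
      gcongr
      exact green_super _ _ _ _ hs
    · intro u hu
      left
      refine geodesic_move s t u v S hg hB ?_
      by_contra h
      exact hu (h1 s u (by omega))

/-- Lemma 4.3: uniform almost multiplicativity of the Green kernels `G_{p,Δ_x}` along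
geodesics, with a constant `C₁` depending only on `S`, `δ₀`, `K` and `λ`. -/
theorem lem_4_3 (S : ℕ) (δ₀ : ℝ) (hδ₀ : δ₀ ∈ Set.Ioo (0 : ℝ) 1) (K : ℕ)
    (lam : ℝ) (hlam : lam ∈ Set.Ioo (0 : ℝ) 1) :
    ∃ C₁ > (0 : ℝ), ∀ p : Word → Word → ℝ, (∀ s t, 0 ≤ p s t) →
      H1 p S → H2 p δ₀ → H3 p δ₀ K → ∀ m : Word → ℝ, H4 p m lam →
      ∀ x : Word, ∀ s ∈ Delta x, ∀ t ∈ Delta x, ∀ v ∈ geodesic s t,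
        greenE (Delta x) p s t < ⊤ ∧ greenE (Delta x) p s v < ⊤ ∧
        greenE (Delta x) p v t < ⊤ ∧
        C₁⁻¹ * ((greenE (Delta x) p s v).toReal * (greenE (Delta x) p v t).toReal) ≤
          (greenE (Delta x) p s t).toReal ∧
        (greenE (Delta x) p s t).toReal ≤
          C₁ * ((greenE (Delta x) p s v).toReal * (greenE (Delta x) p v t).toReal) := by
  obtain ⟨hδ0, hδ1⟩ := id hδ₀
  have hl : 0 < 1 - lam := by linarith [hlam.2]
  have hE : 0 < (δ₀ ^ K) ^ (S + S) := by positivity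
  refine ⟨(1 - lam)⁻¹ + ((δ₀ ^ K) ^ (S + S))⁻¹, by positivity, ?_⟩
  intro p hp h1 h2 h3 m h4 x s hs t ht v hv
  have hvx := geodesic_Delta x s t v hs ht hv
  have hfin : ∀ a ∈ Delta x, ∀ b ∈ Delta x, greenE (Delta x) p a b < ⊤ := by
    intro a ha b hb
    have h := (harnack hδ₀ h3 x b a b hb ha).trans (green_diag hp h1 hlam h4 (Delta x) b)
    have hne : (ENNReal.ofReal δ₀ ^ K) ^ (treeDist b a) ≠ 0 := by
      simp [hδ0]
    by_contra htop
    rw [not_lt, top_le_iff] at htop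
    rw [htop, ENNReal.mul_top hne] at h
    exact ENNReal.ofReal_ne_top (top_le_iff.1 h)
  have f1 := hfin s hs t ht
  have f2 := hfin s hs v hvx
  have f3 := hfin v hvx t ht
  refine ⟨f1, f2, f3, ?_, ?_⟩
  · have h := (green_lower (Delta x) p s v t).trans
      (mul_le_mul' (green_diag hp h1 hlam h4 (Delta x) v) le_rfl)
    have h' := ENNReal.toReal_mono (ENNReal.mul_ne_top ENNReal.ofReal_ne_top f1.ne) h
    rw [ENNReal.toReal_mul, ENNReal.toReal_mul, ENNReal.toReal_ofReal (by positivity)] at h'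
    rw [inv_mul_le_iff₀ (by positivity)]
    have h0 : 0 ≤ ((δ₀ ^ K) ^ (S + S))⁻¹ * (greenE (Delta x) p s t).toReal := by positivity
    rw [add_mul, mul_comm (greenE (Delta x) p s v).toReal]
    linarith
  · have h := green_upper hδ₀ h1 h3 x s t v hvx hv
    have h' := ENNReal.toReal_mono (ENNReal.mul_ne_top f2.ne f3.ne) h
    rw [ENNReal.toReal_mul, ENNReal.toReal_mul, ENNReal.toReal_pow, ENNReal.toReal_pow,
      ENNReal.toReal_ofReal hδ0.le] at h'
    set Q := (greenE (Delta x) p s v).toReal * (greenE (Delta x) p v t).toReal with hQ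
    have hQ0 : 0 ≤ Q := by positivity
    have h0 : 0 ≤ (1 - lam)⁻¹ * Q := by positivity
    have h'' := (le_inv_mul_iff₀ hE).2 h'
    rw [add_mul]
    linarith

end Paper
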